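/- arXiv:1410.6740 — 3 statements merged into one kernel-verified Lean document; each statement's English description precedes it below -/
import Mathlib

section
/- Let F : E → B be a Kumjian-Pask fibration and α, β morphisms of E with Z(α) ∩ Z(β) ≠ ∅. Then there exist morphisms c, d of B with F(α)∘c = F(β)∘d such that the set I = {α∘γ : s(α) = r(γ), F(γ) = c} ∩ {β∘δ : s(β) = r(δ), F(δ) = d} is nonempty, Z(α) ∩ Z(β) = ⋃_{μ ∈ I} Z(μ), and the sets Z(μ) for μ ∈ I are mutually disjoint. -/
/-!
Complete the cospan `(F α, F β)` to a commutative square `F α ∘ c = F β ∘ d =: m` by the Ore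
condition, and let `x` be an infinite path to `X`. If `x ∈ Z(α) ∩ Z(β)`, then applying the functor
`x` to the slice morphisms `c : m ⟶ F α` and `d : m ⟶ F β` exhibits `μ = x(m)` as an element of `I`
(`InPathOf.exists_factor`), and `x ∈ Z(μ)`. Conversely, unique lifting of factorizations gives
`Z(α ∘ γ) ⊆ Z(α)` (`IsDCF.inPathOf_of_comp`), so `Z(μ) ⊆ Z(α) ∩ Z(β)` for `μ ∈ I`. Since every
`μ ∈ I` lies over `m`, membership `x ∈ Z(μ)` forces `μ = x(m)`, whence disjointness.
-/

open CategoryTheory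

universe v u v' u' v'' u''

namespace DCFpaper

variable {E : Type u} [Category.{v} E] {B : Type u'} [Category.{v'} B]

/-- Equality of morphisms with possibly different (but equal) endpoints. -/
def MorEq {C : Type u''} [Category.{v''} C] {W X Y Z : C} (f : W ⟶ X) (g : Y ⟶ Z) : Prop :=
  ∃ (h₁ : W = Y) (h₂ : X = Z), f = eqToHom h₁ ≫ g ≫ eqToHom h₂.symm

/-- A lift of a factorization `F φ = l ≫ ρ` to a factorization of `φ`. -/
structure ConducheLift (F : E ⥤ B) {Y X : E} (φ : Y ⟶ X) {M : B}
    (l : F.obj Y ⟶ M) (ρ : M ⟶ F.obj X) where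
  mid : E
  lam : Y ⟶ mid
  rho : mid ⟶ X
  comp_eq : lam ≫ rho = φ
  obj_eq : F.obj mid = M
  map_lam : F.map lam = l ≫ eqToHom obj_eq.symm
  map_rho : F.map rho = eqToHom obj_eq ≫ ρ

/-- Discrete Conduché fibration: unique factorization lifting. -/
def IsDCF (F : E ⥤ B) : Prop :=
  ∀ {Y X : E} (φ : Y ⟶ X) {M : B} (l : F.obj Y ⟶ M) (ρ : M ⟶ F.obj X),
    F.map φ = l ≫ ρ →
      Nonempty (ConducheLift F φ l ρ) ∧ ∀ L L' : ConducheLift F φ l ρ, L = L'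

/-- Right Ore condition: every cospan can be completed to a commutative square. -/
def RightOre (C : Type u'') [Category.{v''} C] : Prop :=
  ∀ {A X D : C} (m : A ⟶ D) (n : X ⟶ D),
    ∃ (P : C) (p : P ⟶ A) (q : P ⟶ X), p ≫ m = q ≫ n

/-- Strongly right Ore. -/
def StronglyRightOre (C : Type u'') [Category.{v''} C] : Prop :=
  RightOre C ∧
    ∀ {A X D Z₁ Z₂ : C} (m : A ⟶ D) (n : X ⟶ D)
      (p₁ : Z₁ ⟶ A) (q₁ : Z₁ ⟶ X) (p₂ : Z₂ ⟶ A) (q₂ : Z₂ ⟶ X),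
      p₁ ≫ m = q₁ ≫ n → p₂ ≫ m = q₂ ≫ n →
        ∃ (W : C) (a : W ⟶ Z₁) (b : W ⟶ Z₂), a ≫ p₁ = b ≫ p₂ ∧ a ≫ q₁ = b ≫ q₂

/-- Locally split: each induced slice functor admits a section. -/
def LocallySplit (F : E ⥤ B) : Prop :=
  ∀ X : E, ∃ x : Over (F.obj X) ⥤ Over X, x ⋙ Over.post F = 𝟭 (Over (F.obj X))

/-- Kumjian-Pask fibration. -/
def IsKPF (F : E ⥤ B) : Prop :=
  IsDCF F ∧ LocallySplit F ∧ StronglyRightOre B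

/-- Row-finite functor. -/
def RowFinite (F : E ⥤ B) : Prop :=
  ∀ (X : E) {M : B} (b : M ⟶ F.obj X),
    {p : Σ Y : E, Y ⟶ X | ∃ h : F.obj p.1 = M, F.map p.2 = eqToHom h ≫ b}.Finite

/-- Strongly surjective functor. -/
def StronglySurjective (F : E ⥤ B) : Prop :=
  Function.Surjective F.obj ∧
    ∀ (X : E) {M : B} (b : M ⟶ F.obj X),
      ∃ (Y : E) (α : Y ⟶ X) (h : F.obj Y = M), F.map α = eqToHom h ≫ b

/-- An infinite path to `X`: a section of the induced slice functor. -/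
structure InfPath (F : E ⥤ B) (X : E) where
  fn : Over (F.obj X) ⥤ Over X
  sec : fn ⋙ Over.post F = 𝟭 (Over (F.obj X))

/-- The infinite path space `F^∞`. -/
def FInf (F : E ⥤ B) := Σ X : E, InfPath F X

/-- `x ∈ Z(μ)` for `x` an infinite path to the target of `μ`. -/
abbrev InPathOf {F : E ⥤ B} {Y X : E} (μ : Y ⟶ X) (x : InfPath F X) : Prop :=
  x.fn.obj (Over.mk (F.map μ)) = Over.mk μ

/-- `Z(X) ⊆ F^∞`. -/
def ZObj (F : E ⥤ B) (X : E) : Set (FInf F) := {p | p.1 = X}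

/-- `Z(μ) ⊆ F^∞`. -/
def ZMor (F : E ⥤ B) {Y X : E} (μ : Y ⟶ X) : Set (FInf F) :=
  {p | ∃ h : p.1 = X, InPathOf μ (h ▸ p.2)}

/-- The basic sets `Z(μ)`. -/
def pathBasis (F : E ⥤ B) : Set (Set (FInf F)) :=
  {S | ∃ (Y X : E) (μ : Y ⟶ X), S = ZMor F μ}

/-- The topology on `F^∞` generated by the sets `Z(μ)`. -/
def pathTopology (F : E ⥤ B) : TopologicalSpace (FInf F) :=
  TopologicalSpace.generateFrom (pathBasis F)

/-- The morphism `(u, g) : (g ≫ u) ⟶ u` of a slice category. -/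
def oHomW {T : Type u''} [Category.{v''} T] {X A A' : T} {u : A ⟶ X} {v : A' ⟶ X}
    (g : A' ⟶ A) (w : g ≫ u = v) : Over.mk v ⟶ Over.mk u :=
  Over.homMk g w

/-- The defining relation between `w = res_μ x` and `x = ind_μ w`, on objects:
`x(a ∘ F μ) = μ ∘ w(a)` for all `a`. -/
def IndRel (F : E ⥤ B) {Y X : E} (μ : Y ⟶ X) (w : InfPath F Y) (x : InfPath F X) : Prop :=
  ∀ {A : B} (a : A ⟶ F.obj Y),
    x.fn.obj (Over.mk (a ≫ F.map μ)) = Over.mk ((w.fn.obj (Over.mk a)).hom ≫ μ)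

/-- `w = res_μ x`. -/
def ResRel (F : E ⥤ B) {Y X : E} (μ : Y ⟶ X) (x : InfPath F X) (w : InfPath F Y) : Prop :=
  InPathOf μ x ∧ IndRel F μ w x

/-- `q = ind_μ p`, at the level of `F^∞`. -/
def IndRelP (F : E ⥤ B) {Y X : E} (μ : Y ⟶ X) (pw px : FInf F) : Prop :=
  ∃ (hw : pw.1 = Y) (hx : px.1 = X),
    InPathOf μ (hx ▸ px.2) ∧ IndRel F μ (hw ▸ pw.2) (hx ▸ px.2)

/-- `pw = res_μ px`, at the level of `F^∞`. -/
def ResRelP (F : E ⥤ B) {Y X : E} (μ : Y ⟶ X) (px pw : FInf F) : Prop :=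
  ∃ (hw : pw.1 = Y) (hx : px.1 = X), ResRel F μ (hx ▸ px.2) (hw ▸ pw.2)

/-- `z' = ind_μ (res_ν z)`. -/
def Translates (F : E ⥤ B) {W U V : E} (μ : W ⟶ U) (ν : W ⟶ V)
    (z : InfPath F V) (z' : InfPath F U) : Prop :=
  ∃ w : InfPath F W, ResRel F ν z w ∧ InPathOf μ z' ∧ IndRel F μ w z'

/-- `q = ind_μ (res_ν p)`, at the level of `F^∞`. -/
def TranslatesP (F : E ⥤ B) {W U V : E} (μ : W ⟶ U) (ν : W ⟶ V)
    (p q : FInf F) : Prop :=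
  ∃ (hp : p.1 = V) (hq : q.1 = U), Translates F μ ν (hp ▸ p.2) (hq ▸ q.2)

/-- An element `(μ, ν, x)` of `𝒢_F`. -/
structure PreG (F : E ⥤ B) where
  W : E
  U : E
  V : E
  μ : W ⟶ U
  ν : W ⟶ V
  x : InfPath F V
  mem : InPathOf ν x

/-- The relation `∼` on `𝒢_F`. -/
def GERel (F : E ⥤ B) (g g' : PreG F) : Prop :=
  (∃ hV : g.V = g'.V, hV ▸ g.x = g'.x) ∧
  (∃ (Λ : E) (lam : Λ ⟶ g.V),
     (⟨g.V, g.x⟩ : FInf F) ∈ ZMor F lam ∧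
     ZMor F lam ⊆ ZMor F g.ν ∩ ZMor F g'.ν ∧
     ∀ p ∈ ZMor F lam, ∀ q : FInf F,
       TranslatesP F g.μ g.ν p q ↔ TranslatesP F g'.μ g'.ν p q) ∧
  (∃ (M : B) (a : M ⟶ F.obj g.W) (b : M ⟶ F.obj g'.W),
     MorEq (a ≫ F.map g.μ) (b ≫ F.map g'.μ) ∧ MorEq (a ≫ F.map g.ν) (b ≫ F.map g'.ν))

/-- The groupoid `G_F` as a quotient set. -/
def GF (F : E ⥤ B) := Quot (GERel F)

/-- `k` is a composite of `g` and `h` in `G_F` (at the level of representatives). -/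
def CompRel (F : E ⥤ B) (g h k : PreG F) : Prop :=
  TranslatesP F h.μ h.ν ⟨h.V, h.x⟩ ⟨g.V, g.x⟩ ∧
  ∃ (P : E) (γ : P ⟶ g.W) (η : P ⟶ h.W) (hUV : h.U = g.V),
    γ ≫ g.ν = (η ≫ h.μ) ≫ eqToHom hUV ∧
    InPathOf (γ ≫ g.ν) g.x ∧
    ∃ mem : InPathOf (η ≫ h.ν) h.x,
      GERel F k ⟨P, g.U, h.V, γ ≫ g.μ, η ≫ h.ν, h.x, mem⟩

/-- The basic set `Z(μ,ν) ⊆ G_F`. -/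
def ZPair (F : E ⥤ B) {W U V : E} (μ : W ⟶ U) (ν : W ⟶ V) : Set (GF F) :=
  {g | ∃ (x : InfPath F V) (mem : InPathOf ν x),
        g = Quot.mk (GERel F) ⟨W, U, V, μ, ν, x, mem⟩}

/-- The basic sets `Z(μ,ν)`. -/
def pairBasis (F : E ⥤ B) : Set (Set (GF F)) :=
  {s | ∃ (W U V : E) (μ : W ⟶ U) (ν : W ⟶ V), s = ZPair F μ ν}

/-- The topology on `G_F`. -/
def gTopology (F : E ⥤ B) : TopologicalSpace (GF F) :=
  TopologicalSpace.generateFrom (pairBasis F)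

/-- A subcategory of a category: a class of objects and morphisms closed under
identities and composition. -/
structure Subcat (C : Type u'') [Category.{v''} C] where
  objs : Set C
  homs : ∀ ⦃M N : C⦄, (M ⟶ N) → Prop
  id_mem : ∀ {M : C}, M ∈ objs → homs (𝟙 M)
  comp_mem : ∀ {M N P : C} {f : M ⟶ N} {g : N ⟶ P}, homs f → homs g → homs (f ≫ g)
  src_mem : ∀ {M N : C} {f : M ⟶ N}, homs f → M ∈ objs
  tgt_mem : ∀ {M N : C} {f : M ⟶ N}, homs f → N ∈ objs

instance Subcat.cat {C : Type u''} [Category.{v''} C] (S : Subcat C) : Category S.objs where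
  Hom M N := {f : M.1 ⟶ N.1 // S.homs f}
  id M := ⟨𝟙 M.1, S.id_mem M.2⟩
  comp f g := ⟨f.1 ≫ g.1, S.comp_mem f.2 g.2⟩
  id_comp f := Subtype.ext (Category.id_comp f.1)
  comp_id f := Subtype.ext (Category.comp_id f.1)
  assoc f g h := Subtype.ext (Category.assoc f.1 g.1 h.1)

/-- The inclusion functor of a subcategory. -/
def Subcat.ι {C : Type u''} [Category.{v''} C] (S : Subcat C) : S.objs ⥤ C where
  obj M := M.1
  map f := f.1

/-- `f` is (up to the identifications of objects) the image of a morphism of `E`. -/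
def InImage (F : E ⥤ B) {M N : B} (f : M ⟶ N) : Prop :=
  ∃ (Y X : E) (μ : Y ⟶ X) (hY : F.obj Y = M) (hX : F.obj X = N),
    F.map μ = eqToHom hY ≫ f ≫ eqToHom hX.symm

/-- An aperiodic infinite path. -/
def AperiodicPath (F : E ⥤ B) {X : E} (x : InfPath F X) : Prop :=
  ∀ {Y Y' : E} (α : Y ⟶ X) (β : Y' ⟶ X) (w : FInf F),
    ResRelP F α ⟨X, x⟩ w → ResRelP F β ⟨X, x⟩ w → MorEq α β

/-- Spans in a category, as a type. -/
def SpanT (C : Type u'') [Category.{v''} C] := Σ (P Q R : C), (P ⟶ Q) × (P ⟶ R)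


/-- Pairs of composable elements of `G_F`. -/
def ComposablePairs (F : E ⥤ B) : Set (GF F × GF F) :=
  {p | ∃ g h : PreG F, p.1 = Quot.mk (GERel F) g ∧ p.2 = Quot.mk (GERel F) h ∧
        TranslatesP F h.μ h.ν ⟨h.V, h.x⟩ ⟨g.V, g.x⟩}

/-- A section of the slice functor sends `a` to a morphism lying over `a`. -/
theorem InfPath.map_hom {F : E ⥤ B} {X : E} (x : InfPath F X) {M : B} (a : M ⟶ F.obj X) :
    ∃ h : F.obj (x.fn.obj (Over.mk a)).left = M,
      F.map (x.fn.obj (Over.mk a)).hom = eqToHom h ≫ a := by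
  have e : (Over.post F).obj (x.fn.obj (Over.mk a)) = Over.mk a :=
    Functor.congr_obj x.sec (Over.mk a)
  refine ⟨congrArg Comma.left e, ?_⟩
  have w := Over.w (eqToHom e)
  rw [Over.eqToHom_left] at w
  exact w.symm

/-- A section of the slice functor sends a morphism of `B/F(X)` to one lying over it. -/
theorem InfPath.map_left {F : E ⥤ B} {X : E} (x : InfPath F X) {M N : B}
    {a : M ⟶ F.obj X} {b : N ⟶ F.obj X} (g : Over.mk a ⟶ Over.mk b)
    (h : F.obj (x.fn.obj (Over.mk a)).left = M)
    (k : F.obj (x.fn.obj (Over.mk b)).left = N) :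
    F.map (x.fn.map g).left = eqToHom h ≫ g.left ≫ eqToHom k.symm := by
  have e := congrArg CommaMorphism.left (Functor.congr_hom x.sec g)
  simp only [Functor.comp_map, Functor.id_map, Over.comp_left, Over.eqToHom_left] at e
  exact e

/-- If `x` runs through `μ`, its value at any morphism equal to `F μ` up to its source is `μ`. -/
theorem InPathOf.obj_mk {F : E ⥤ B} {Z X : E} {μ : Z ⟶ X} {x : InfPath F X}
    (hx : InPathOf μ x) {M : B} {m : M ⟶ F.obj X} (h : F.obj Z = M)
    (hm : F.map μ = eqToHom h ≫ m) : x.fn.obj (Over.mk m) = Over.mk μ := by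
  subst h
  rw [eqToHom_refl, Category.id_comp] at hm
  subst hm
  exact hx

theorem inPathOf_of_obj_mk {F : E ⥤ B} {Z X : E} {μ : Z ⟶ X} {x : InfPath F X}
    {M : B} {m : M ⟶ F.obj X} (h : F.obj Z = M)
    (hm : F.map μ = eqToHom h ≫ m) (hx : x.fn.obj (Over.mk m) = Over.mk μ) :
    InPathOf μ x := by
  subst h
  rw [eqToHom_refl, Category.id_comp] at hm
  subst hm
  exact hx

/-- `Z(α ∘ γ) ⊆ Z(α)`: the value of `x` at `F α` provides a second lift of the factorization
`F α ∘ F γ`, which coincides with `(γ, α)` by uniqueness. -/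
theorem IsDCF.inPathOf_of_comp {F : E ⥤ B} (hF : IsDCF F) {Z Y X : E} {γ : Z ⟶ Y} {α : Y ⟶ X}
    {x : InfPath F X} (hx : InPathOf (γ ≫ α) x) : InPathOf α x := by
  obtain ⟨k, hk⟩ := x.map_hom (F.map α)
  obtain ⟨h, -⟩ := x.map_hom (F.map (γ ≫ α))
  let g : Over.mk (F.map (γ ≫ α)) ⟶ Over.mk (F.map α) :=
    Over.homMk (F.map γ) (F.map_comp γ α).symm
  have e : Over.mk (γ ≫ α) = x.fn.obj (Over.mk (F.map (γ ≫ α))) := hx.symm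
  let f : Over.mk (γ ≫ α) ⟶ x.fn.obj (Over.mk (F.map α)) := eqToHom e ≫ x.fn.map g
  have hf : F.map f.left = F.map γ ≫ eqToHom k.symm := by
    simp only [f, Over.comp_left, Over.eqToHom_left, F.map_comp, eqToHom_map,
      x.map_left g h k]
    simp [g]
  let L : ConducheLift F (γ ≫ α) (F.map γ) (F.map α) :=
    ⟨Y, γ, α, rfl, rfl, by simp, by simp⟩
  let L' : ConducheLift F (γ ≫ α) (F.map γ) (F.map α) :=
    ⟨_, f.left, (x.fn.obj (Over.mk (F.map α))).hom, Over.w f, k, hf, hk⟩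
  have hL : L' = L := (hF (γ ≫ α) (F.map γ) (F.map α) (F.map_comp γ α)).2 L' L
  exact congrArg (fun K : ConducheLift F (γ ≫ α) (F.map γ) (F.map α) => Over.mk K.rho) hL

/-- If `x ∈ Z(α)`, then `x (F α ∘ c)` factors as `α ∘ γ` with `γ` lying over `c`. -/
theorem InPathOf.exists_factor {F : E ⥤ B} {Y X : E} {α : Y ⟶ X} {x : InfPath F X}
    (hx : InPathOf α x) {M : B} (c : M ⟶ F.obj Y) {m : M ⟶ F.obj X} (hm : c ≫ F.map α = m) :
    ∃ (γ : (x.fn.obj (Over.mk m)).left ⟶ Y) (h : F.obj (x.fn.obj (Over.mk m)).left = M),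
      F.map γ = eqToHom h ≫ c ∧ γ ≫ α = (x.fn.obj (Over.mk m)).hom := by
  obtain ⟨k, -⟩ := x.map_hom (F.map α)
  obtain ⟨h, -⟩ := x.map_hom m
  let g : Over.mk m ⟶ Over.mk (F.map α) := Over.homMk c hm
  let f : x.fn.obj (Over.mk m) ⟶ Over.mk α := x.fn.map g ≫ eqToHom hx
  refine ⟨f.left, h, ?_, Over.w f⟩
  simp only [f, Over.comp_left, Over.eqToHom_left, F.map_comp, eqToHom_map, x.map_left g h k]
  simp [g]

theorem statement_10 (F : E ⥤ B) (hF : IsKPF F) {Y Y' X : E} (α : Y ⟶ X) (β : Y' ⟶ X)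
    (hne : (ZMor F α ∩ ZMor F β).Nonempty) :
    ∃ (M : B) (c : M ⟶ F.obj Y) (d : M ⟶ F.obj Y'),
      c ≫ F.map α = d ≫ F.map β ∧
      ∃ I : Set (Σ Z : E, Z ⟶ X),
        I = {p : Σ Z : E, Z ⟶ X |
              (∃ (γ : p.1 ⟶ Y) (h : F.obj p.1 = M),
                F.map γ = eqToHom h ≫ c ∧ γ ≫ α = p.2) ∧
              (∃ (δ : p.1 ⟶ Y') (h : F.obj p.1 = M),
                F.map δ = eqToHom h ≫ d ∧ δ ≫ β = p.2)} ∧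
        I.Nonempty ∧
        (ZMor F α ∩ ZMor F β) = (⋃ p ∈ I, ZMor F p.2) ∧
        I.Pairwise (fun p q => Disjoint (ZMor F p.2) (ZMor F q.2)) := by
  obtain ⟨M, c, d, hcd⟩ := hF.2.2.1 (F.map α) (F.map β)
  have key : ∀ x : InfPath F X, InPathOf α x → InPathOf β x →
      ((∃ (γ : (x.fn.obj (Over.mk (c ≫ F.map α))).left ⟶ Y)
          (h : F.obj (x.fn.obj (Over.mk (c ≫ F.map α))).left = M),
          F.map γ = eqToHom h ≫ c ∧ γ ≫ α = (x.fn.obj (Over.mk (c ≫ F.map α))).hom) ∧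
        (∃ (δ : (x.fn.obj (Over.mk (c ≫ F.map α))).left ⟶ Y')
          (h : F.obj (x.fn.obj (Over.mk (c ≫ F.map α))).left = M),
          F.map δ = eqToHom h ≫ d ∧ δ ≫ β = (x.fn.obj (Over.mk (c ≫ F.map α))).hom)) ∧
      InPathOf (x.fn.obj (Over.mk (c ≫ F.map α))).hom x := by
    intro x hα hβ
    obtain ⟨h, hm⟩ := x.map_hom (c ≫ F.map α)
    exact ⟨⟨hα.exists_factor c rfl, hβ.exists_factor d hcd.symm⟩,
      inPathOf_of_obj_mk h hm rfl⟩
  refine ⟨M, c, d, hcd, _, rfl, ?_, ?_, ?_⟩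
  · obtain ⟨⟨X', x⟩, ⟨h, hα⟩, ⟨_, hβ⟩⟩ := hne
    obtain rfl : X' = X := h
    exact ⟨⟨_, _⟩, (key x hα hβ).1⟩
  · refine Set.Subset.antisymm ?_ (Set.iUnion₂_subset ?_)
    · rintro ⟨X', x⟩ ⟨⟨h, hα⟩, ⟨_, hβ⟩⟩
      obtain rfl : X' = X := h
      exact Set.mem_biUnion (x := ⟨_, (x.fn.obj (Over.mk (c ≫ F.map α))).hom⟩)
        (key x hα hβ).1 ⟨rfl, (key x hα hβ).2⟩
    · rintro ⟨Z, μ⟩ ⟨⟨γ, -, -, hγ⟩, ⟨δ, -, -, hδ⟩⟩ ⟨X', x⟩ ⟨h, hμ⟩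
      obtain rfl : X' = X := h
      refine ⟨⟨rfl, IsDCF.inPathOf_of_comp hF.1 (γ := γ) ?_⟩,
        ⟨rfl, IsDCF.inPathOf_of_comp hF.1 (γ := δ) ?_⟩⟩
      · rw [hγ]; exact hμ
      · rw [hδ]; exact hμ
  · rintro ⟨Z, μ⟩ ⟨⟨γ, h, hc, hγ⟩, -⟩ ⟨Z', μ'⟩ ⟨⟨γ', h', hc', hγ'⟩, -⟩ hn
    refine Set.disjoint_left.2 ?_
    rintro ⟨X', x⟩ ⟨hX, hμ⟩ ⟨_, hμ'⟩
    obtain rfl : X' = X := hX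
    apply hn
    dsimp only at hγ hγ'
    have e : Over.mk μ = Over.mk μ' :=
      (InPathOf.obj_mk hμ h (m := c ≫ F.map α) (by
        rw [← hγ, F.map_comp, hc, Category.assoc])).symm.trans
      (InPathOf.obj_mk hμ' h' (by rw [← hγ', F.map_comp, hc', Category.assoc]))
    exact congrArg (fun P : Over X' => (⟨P.left, P.hom⟩ : Σ Z : E, Z ⟶ X')) e

end DCFpaper
end

section
/- Let F : E → B be a row-finite, strongly surjective Kumjian-Pask fibration such that for every object B of B the slice category B/B has countably many objects and morphisms. Then (1) for every morphism β of E the set Z(β) is compact in F^∞, and (2) F^∞ is totally disconnected. -/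
/-! The functor `Over.post F : Over X ⥤ Over (F.obj X)` is faithful, by uniqueness of lifted
factorizations (`overPost_map_injective`). Hence an infinite path to `X` is determined by its values
on objects (`InfPath.ext_obj`), and a choice of lifts of the objects of `Over (F.obj X)` is an
infinite path as soon as any two of the chosen lifts agree with some infinite path
(`exists_infPath`). By row-finiteness, infinite paths to `X` thus form a closed subset of a product
of finite discrete sets, the fibres of `Over.post F` on objects.

Compactness of `Z(μ)` is then Tychonoff's theorem, phrased with ultrafilters: an ultrafilter
containing `Z(μ)` selects one lift of every object of `Over (F.obj X)`, these selected lifts form an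
infinite path, and the ultrafilter converges to it.

The cylinders of paths with a prescribed value at one object are clopen (`isClopen_cyl`), and so is
the set of all paths to `X` (`isClopen_ZObj`); together these sets separate points, so `F^∞` is totally separated,
hence totally disconnected. -/

open CategoryTheory

universe v u v' u' v'' u''

namespace DCFpaper

variable {E : Type u} [Category.{v} E] {B : Type u'} [Category.{v'} B]

/-- An infinite path to `X`, as a point of `F^∞`. -/
def InfPath.toFInf {F : E ⥤ B} {X : E} (x : InfPath F X) : FInf F :=
  ⟨X, x⟩

theorem InfPath.toFInf_injective {F : E ⥤ B} {X : E} {x x' : InfPath F X}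
    (h : x.toFInf = x'.toFInf) : x = x' :=
  eq_of_heq (Sigma.mk.inj h).2

/-- The set of infinite paths to `X` whose value at the object `b` of the slice category is `α`.
It is `Z(α)` when `α` lies over `b`, and empty otherwise. -/
def cyl (F : E ⥤ B) {X : E} (b : Over (F.obj X)) (α : Over X) : Set (FInf F) :=
  {p | ∃ x : InfPath F X, p = x.toFInf ∧ x.fn.obj b = α}

theorem InfPath.post_obj {F : E ⥤ B} {X : E} (x : InfPath F X) (b : Over (F.obj X)) :
    (Over.post F).obj (x.fn.obj b) = b :=
  Functor.congr_obj x.sec b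

theorem ZMor_eq_cyl (F : E ⥤ B) {Y X : E} (μ : Y ⟶ X) :
    ZMor F μ = cyl F (Over.mk (F.map μ)) (Over.mk μ) := by
  ext ⟨X', x⟩
  constructor
  · rintro ⟨h, hx⟩
    cases h
    exact ⟨x, rfl, hx⟩
  · rintro ⟨x', h, hx⟩
    cases h
    exact ⟨rfl, hx⟩

theorem mem_cyl {F : E ⥤ B} {X : E} {x : InfPath F X} {b : Over (F.obj X)} {α : Over X} :
    x.toFInf ∈ cyl F b α ↔ x.fn.obj b = α := by
  constructor
  · rintro ⟨x', h, hx⟩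
    rwa [InfPath.toFInf_injective h]
  · exact fun h => ⟨x, rfl, h⟩

theorem overPost_map_injective {F : E ⥤ B} (hF : IsDCF F) {X : E} {β α : Over X}
    (γ γ' : β ⟶ α) (h : (Over.post F).map γ = (Over.post F).map γ') : γ = γ' := by
  have h' : F.map γ.left = F.map γ'.left := congrArg (fun t => t.left) h
  have e : F.map β.hom = F.map γ.left ≫ F.map α.hom := by
    rw [← F.map_comp, Over.w]
  -- `γ` and `γ'` are both first factors of lifts of the same factorization of `F.map β.hom`.
  have := (hF β.hom (F.map γ.left) (F.map α.hom) e).2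
    ⟨α.left, γ.left, α.hom, Over.w γ, rfl, by simp, by simp⟩
    ⟨α.left, γ'.left, α.hom, Over.w γ', rfl, by simp [h'], by simp⟩
  injection this with _ h2 _
  exact Over.OverMorphism.ext h2

theorem InfPath.post_map {F : E ⥤ B} {X : E} (x : InfPath F X) {u v : Over (F.obj X)}
    (g : u ⟶ v) : (Over.post F).map (x.fn.map g) =
      eqToHom (x.post_obj u) ≫ g ≫ eqToHom (x.post_obj v).symm := by
  simpa using Functor.congr_hom x.sec g

theorem InfPath.ext_obj {F : E ⥤ B} (hF : IsDCF F) {X : E} {x x' : InfPath F X}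
    (h : ∀ b, x.fn.obj b = x'.fn.obj b) : x = x' := by
  have : x.fn = x'.fn := by
    refine CategoryTheory.Functor.ext h fun u v g => overPost_map_injective hF _ _ ?_
    simp [-Over.post_map, InfPath.post_map, eqToHom_map]
  cases x
  cases x'
  cases this
  rfl

/-- A choice `y` of objects of `Over X` which agrees at any two places with some infinite path is
itself (the object part of) an infinite path. -/
theorem exists_infPath {F : E ⥤ B} (hF : IsDCF F) {X : E} (y : Over (F.obj X) → Over X)
    (hy : ∀ u v, ∃ x : InfPath F X, x.fn.obj u = y u ∧ x.fn.obj v = y v) :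
    ∃ x : InfPath F X, ∀ b, x.fn.obj b = y b := by
  have ho : ∀ b, (Over.post F).obj (y b) = b := fun b => by
    obtain ⟨x, hx, -⟩ := hy b b
    rw [← hx, x.post_obj]
  have hm : ∀ {u v : Over (F.obj X)} (g : u ⟶ v), ∃ m : y u ⟶ y v,
      (Over.post F).map m = eqToHom (ho u) ≫ g ≫ eqToHom (ho v).symm := fun {u v} g => by
    obtain ⟨x, hu, hv⟩ := hy u v
    exact ⟨eqToHom hu.symm ≫ x.fn.map g ≫ eqToHom hv, by
      simp [-Over.post_map, InfPath.post_map, eqToHom_map]⟩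
  choose m hm using @hm
  refine ⟨⟨{ obj := y, map := m, map_id := fun u => ?_, map_comp := fun f g => ?_ }, ?_⟩,
    fun b => rfl⟩
  · exact overPost_map_injective hF _ _ (by simp [-Over.post_map, hm])
  · exact overPost_map_injective hF _ _ (by simp [-Over.post_map, hm])
  · exact CategoryTheory.Functor.ext ho fun u v g => by simpa using hm g

theorem finite_fibre {F : E ⥤ B} (hrf : RowFinite F) {X : E} (b : Over (F.obj X)) :
    {α : Over X | (Over.post F).obj α = b}.Finite := by
  refine ((hrf X b.hom).image fun p => Over.mk p.2).subset ?_
  rintro α rfl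
  exact ⟨⟨α.left, α.hom⟩, ⟨rfl, (Category.id_comp (F.map α.hom)).symm⟩, rfl⟩

theorem isOpen_cyl (F : E ⥤ B) {X : E} (b : Over (F.obj X)) (α : Over X) :
    @IsOpen _ (pathTopology F) (cyl F b α) := by
  let _ := pathTopology F
  by_cases h : (Over.post F).obj α = b
  · subst h
    exact .basic _ ⟨α.left, X, α.hom, (ZMor_eq_cyl F α.hom).symm⟩
  · convert isOpen_empty
    rw [Set.eq_empty_iff_forall_notMem]
    rintro _ ⟨x, rfl, rfl⟩
    exact h (x.post_obj b)

theorem isOpen_ZObj (F : E ⥤ B) (X : E) : @IsOpen _ (pathTopology F) (ZObj F X) := by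
  let _ := pathTopology F
  have : ZObj F X = ⋃ α, cyl F (Over.mk (𝟙 (F.obj X))) α := by
    ext p
    rw [Set.mem_iUnion]
    constructor
    · obtain ⟨X', x⟩ := p
      intro h
      cases h
      exact ⟨_, x, rfl, rfl⟩
    · rintro ⟨α, x, rfl, -⟩
      rfl
  rw [this]
  exact isOpen_iUnion fun α => isOpen_cyl F _ α

theorem isClopen_ZObj (F : E ⥤ B) (X : E) : @IsClopen _ (pathTopology F) (ZObj F X) := by
  let _ := pathTopology F
  refine ⟨⟨?_⟩, isOpen_ZObj F X⟩
  have : (ZObj F X)ᶜ = ⋃ (X' : E) (_ : X' ≠ X), ZObj F X' := by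
    ext p
    simp [ZObj]
  rw [this]
  exact isOpen_iUnion fun X' => isOpen_iUnion fun _ => isOpen_ZObj F X'

theorem isClopen_cyl (F : E ⥤ B) {X : E} (b : Over (F.obj X)) (α : Over X) :
    @IsClopen _ (pathTopology F) (cyl F b α) := by
  let _ := pathTopology F
  refine ⟨⟨?_⟩, isOpen_cyl F b α⟩
  have : (cyl F b α)ᶜ = (ZObj F X)ᶜ ∪ ⋃ (α' : Over X) (_ : α' ≠ α), cyl F b α' := by
    ext p
    by_cases h : p ∈ ZObj F X
    · obtain ⟨x, rfl⟩ : ∃ x : InfPath F X, p = x.toFInf := by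
        obtain ⟨X', x⟩ := p
        cases h
        exact ⟨x, rfl⟩
      simp [mem_cyl, h]
    · have h2 : p ∉ cyl F b α := by
        rintro ⟨x, rfl, -⟩
        exact h rfl
      exact iff_of_true h2 (Or.inl h)
  rw [this]
  exact (isClopen_ZObj F X).1.isOpen_compl.union
    (isOpen_iUnion fun α' => isOpen_iUnion fun _ => isOpen_cyl F b α')

theorem isCompact_ZMor {F : E ⥤ B} (hF : IsDCF F) (hrf : RowFinite F) {Y X : E} (μ : Y ⟶ X) :
    @IsCompact _ (pathTopology F) (ZMor F μ) := by
  let _ := pathTopology F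
  rw [ZMor_eq_cyl, isCompact_iff_ultrafilter_le_nhds']
  intro f hf
  -- `f` selects one of the finitely many lifts of each `b`.
  have hsel : ∀ b : Over (F.obj X), ∃ α, cyl F b α ∈ f := fun b => by
    have hU : (⋃ α ∈ {α : Over X | (Over.post F).obj α = b}, cyl F b α) ∈ f := by
      refine Filter.mem_of_superset hf ?_
      rintro _ ⟨x, rfl, -⟩
      exact Set.mem_biUnion (x.post_obj b) (mem_cyl.2 rfl)
    obtain ⟨α, -, hα⟩ := (Ultrafilter.finite_biUnion_mem_iff (finite_fibre hrf b)).1 hU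
    exact ⟨α, hα⟩
  choose y hy using hsel
  obtain ⟨x, hx⟩ := exists_infPath hF y fun u v => by
    obtain ⟨_, ⟨x, rfl, hu⟩, hv⟩ := f.nonempty_of_mem (Filter.inter_mem (hy u) (hy v))
    exact ⟨x, hu, mem_cyl.1 hv⟩
  refine ⟨x.toFInf, ?_, ?_⟩
  -- Two cylinders at `F.map μ` which meet are equal, so `y` takes the value `μ` there.
  · obtain ⟨_, ⟨x', rfl, hu⟩, hv⟩ := f.nonempty_of_mem (Filter.inter_mem hf (hy (Over.mk (F.map μ))))
    rw [mem_cyl, hx, ← mem_cyl.1 hv, hu]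
  · rw [show nhds x.toFInf = _ from TopologicalSpace.nhds_generateFrom]
    refine le_iInf₂ ?_
    rintro _ ⟨hs, Y', X', ν, rfl⟩
    rw [ZMor_eq_cyl] at hs ⊢
    obtain ⟨x', e, hx'⟩ := hs
    cases e
    rw [Filter.le_principal_iff, ← hx', hx]
    exact hy _

theorem statement_13 (F : E ⥤ B) (hF : IsKPF F) (hrf : RowFinite F)
    (hss : StronglySurjective F)
    (hcount : ∀ M : B, Countable (Σ u v : Over M, u ⟶ v)) :
    (∀ {Y X : E} (μ : Y ⟶ X), @IsCompact (FInf F) (pathTopology F) (ZMor F μ)) ∧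
    @TotallyDisconnectedSpace (FInf F) (pathTopology F) := by
  refine ⟨fun μ => isCompact_ZMor hF.1 hrf μ, ?_⟩
  let _ := pathTopology F
  suffices TotallySeparatedSpace (FInf F) from inferInstance
  rw [totallySeparatedSpace_iff_exists_isClopen]
  rintro ⟨X, x⟩ ⟨X', x'⟩ hne
  by_cases h : X' = X
  · subst h
    obtain ⟨b, hb⟩ : ∃ b, x.fn.obj b ≠ x'.fn.obj b := by
      by_contra! h
      exact hne (by rw [InfPath.ext_obj hF.1 h])
    exact ⟨_, isClopen_cyl F b (x.fn.obj b), mem_cyl.2 rfl, fun h => hb (mem_cyl.1 h).symm⟩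
  · exact ⟨_, isClopen_ZObj F X, rfl, h⟩

end DCFpaper
end

section
/- Let F : E → B be a row-finite Kumjian-Pask fibration. Then the relation ~ on 𝒢_F is an equivalence relation, and the partially defined composition on G_F = 𝒢_F/~ given as follows is well-defined and makes G_F a groupoid: [μ,ν,x]·[σ,τ,y] is defined when x = ind_σ(res_τ(y)), in which case, choosing a, b in B with F(ν)∘a = F(σ)∘b (possible by the right Ore condition) and setting γ = x₂(F(ν),a) and η = x₂(F(σ),b) (so that ν∘γ = σ∘η), one puts [μ,ν,x]·[σ,τ,y] = [μ∘γ, τ∘η, y]; the units are the classes [r(x), r(x), x] for x ∈ F^∞, and the inverse of [μ,ν,x] is [ν,μ, ind_μ(res_ν(x))]. -/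
/-!
An infinite path `x` to `X` is handled through the set of morphisms `α` with `x ∈ Z(α)`. The sets
that arise are characterized by two properties (`PathSet`, `InfPath.pathSet`,
`PathSet.exists_infPath`): closure under right factors, and exactly one member over each morphism of `B`
into `F X`. In these terms `y = ind_μ (res_ν x)` says that `x ∈ Z(ν ∘ α)` iff `y ∈ Z(μ ∘ α)` for
all `α` (`Tr`), and `ind_μ` exists because `B` is strongly right Ore (`PathSet.ind`). By the right
Ore condition each such set is directed.

The key point is that `(μ, ν, x) ∼ (μ', ν', x)` holds iff the two have a common refinement in `E`:
`μ ∘ γ = μ' ∘ γ'` and `ν ∘ γ = ν' ∘ γ'` with `x ∈ Z(ν ∘ γ)` (`geRel_iff`, `Refine`). Indeed the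
morphisms `a`, `b` of `B` in the definition of `∼` lift uniquely along `x`; the lifts agree after
composition with `ν`, `ν'` because they lie on `x`, and after composition with `μ`, `μ'` because
they lie on the common translate of `x`. Transitivity is then directedness.

For composition, two squares `ν ∘ γ = σ ∘ η` with `x ∈ Z(ν ∘ γ)` become equal after refinement, by
the strong right Ore condition and unique lifting (`refine_square`). Independence of the
representatives follows, since composable pairs have common refinements (`Comp.congr`). Each
groupoid law is then checked on one convenient choice of squares.
-/

open CategoryTheory

universe v u v' u' v'' u''

namespace DCFpaper

variable {E : Type u} [Category.{v} E] {B : Type u'} [Category.{v'} B]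

/-! ### Equality in slice categories and unique factorization lifting -/

lemma over_mk_eq {C : Type u''} [Category.{v''} C] {Y Z X : C} {f : Y ⟶ X} {g : Z ⟶ X} :
    Over.mk f = Over.mk g ↔ ∃ h : Y = Z, f = eqToHom h ≫ g := by
  constructor
  · intro h
    have h1 : Y = Z := congrArg (fun o : Over X => o.left) h
    subst h1
    refine ⟨rfl, ?_⟩
    simp only [eqToHom_refl, Category.id_comp]
    have := h
    simp only [Over.mk, CostructuredArrow.mk] at this
    injection this with _ _ h3
  · rintro ⟨rfl, h⟩
    simp only [eqToHom_refl, Category.id_comp] at h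
    rw [h]

lemma IsDCF.lift {F : E ⥤ B} (hF : IsDCF F) {Y X : E} (φ : Y ⟶ X) {M : B}
    (l : F.obj Y ⟶ M) (ρ : M ⟶ F.obj X) (h : F.map φ = l ≫ ρ) :
    ∃ (Z : E) (γ : Y ⟶ Z) (δ : Z ⟶ X) (e : F.obj Z = M), γ ≫ δ = φ ∧
      F.map γ = l ≫ eqToHom e.symm ∧ F.map δ = eqToHom e ≫ ρ := by
  obtain ⟨⟨L⟩, -⟩ := hF φ l ρ h
  exact ⟨L.mid, L.lam, L.rho, L.obj_eq, L.comp_eq, L.map_lam, L.map_rho⟩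

lemma IsDCF.uniq {F : E ⥤ B} (hF : IsDCF F) {Y X Z₁ Z₂ : E} {l₁ : Y ⟶ Z₁} {r₁ : Z₁ ⟶ X}
    {l₂ : Y ⟶ Z₂} {r₂ : Z₂ ⟶ X} (h : l₁ ≫ r₁ = l₂ ≫ r₂) (e : F.obj Z₁ = F.obj Z₂)
    (hl : F.map l₁ = F.map l₂ ≫ eqToHom e.symm) (hr : F.map r₁ = eqToHom e ≫ F.map r₂) :
    ∃ q : Z₁ = Z₂, l₁ = l₂ ≫ eqToHom q.symm ∧ r₁ = eqToHom q ≫ r₂ := by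
  have := (hF (l₂ ≫ r₂) (F.map l₂) (F.map r₂) (F.map_comp _ _)).2
    ⟨Z₁, l₁, r₁, h, e, hl, hr⟩ ⟨Z₂, l₂, r₂, rfl, rfl, by simp, by simp⟩
  injection this with h1 h2 h3
  subst h1
  exact ⟨rfl, by simpa using h2, by simpa using h3⟩

/-- Morphisms in the image of `F` need not be monic, but two lifts of the same morphism of `B`
that agree after composition with a common `r` are equal. -/
lemma IsDCF.cancel {F : E ⥤ B} (hF : IsDCF F) {Y X Z : E} {l₁ l₂ : Y ⟶ Z} {r : Z ⟶ X}
    (h : l₁ ≫ r = l₂ ≫ r) (hl : F.map l₁ = F.map l₂) : l₁ = l₂ := by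
  obtain ⟨_, h2, _⟩ := hF.uniq h rfl (by simpa using hl) (by simp)
  simpa using h2

/-! ### Infinite paths as sets of morphisms -/

/-- The set of morphisms `α` with `x ∈ Z(α)`, for an infinite path `x` to `X`, abstractly: it is
closed under passing to right factors and contains exactly one morphism over each morphism of `B`
with target `F X`. -/
structure PathSet (F : E ⥤ B) (X : E) (S : ∀ ⦃Y : E⦄, (Y ⟶ X) → Prop) : Prop where
  head : ∀ {Y Z : E} (β : Y ⟶ Z) (α : Z ⟶ X), S (β ≫ α) → S α
  ex : ∀ {M : B} (u : M ⟶ F.obj X), ∃ (Z : E) (α : Z ⟶ X) (h : F.obj Z = M),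
    F.map α = eqToHom h ≫ u ∧ S α
  uniq : ∀ {Z Z' : E} (α : Z ⟶ X) (α' : Z' ⟶ X), S α → S α' →
    ∀ h : F.obj Z = F.obj Z', F.map α = eqToHom h ≫ F.map α' →
      ∃ q : Z = Z', α = eqToHom q ≫ α'

namespace PathSet

variable {F : E ⥤ B} {X : E} {S : ∀ ⦃Y : E⦄, (Y ⟶ X) → Prop}

/-- If `F α` factors through `F α'`, for two elements of a path set, then the factorization lifts
to one of `α` through `α'`. -/
lemma lift_hom (hS : PathSet F X S) (hF : IsDCF F) {Y Y' : E} {α : Y ⟶ X} {α' : Y' ⟶ X}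
    (h : S α) (h' : S α') (m : F.obj Y ⟶ F.obj Y') (hm : m ≫ F.map α' = F.map α) :
    ∃ γ : Y ⟶ Y', γ ≫ α' = α ∧ F.map γ = m := by
  obtain ⟨Z, γ, δ, e, rfl, h2, h3⟩ := hF.lift α m (F.map α') hm.symm
  obtain ⟨rfl, h4⟩ := hS.uniq δ α' (hS.head _ _ h) h' e h3
  exact ⟨γ, by simp [h4], by simpa using h2⟩

lemma ext_left (hS : PathSet F X S) (hF : IsDCF F) {W : E} {α : W ⟶ X} (hα : S α) {M : B}
    (a : M ⟶ F.obj W) : ∃ (Q : E) (h : F.obj Q = M) (e : Q ⟶ W),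
      F.map e = eqToHom h ≫ a ∧ S (e ≫ α) := by
  obtain ⟨Q, δ, rfl, h1, h2⟩ := hS.ex (a ≫ F.map α)
  obtain ⟨e, rfl, h4⟩ := hS.lift_hom hF h2 hα a (by simpa using h1.symm)
  exact ⟨Q, rfl, e, by simpa using h4, h2⟩

/-- A commutative square in `B` on the images of two elements of a path set lifts to `E`. -/
lemma lift_square (hS : PathSet F X S) (hF : IsDCF F) {W W' : E} {α : W ⟶ X} {β : W' ⟶ X}
    (hα : S α) (hβ : S β) {M : B} (a : M ⟶ F.obj W) (b : M ⟶ F.obj W')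
    (h : a ≫ F.map α = b ≫ F.map β) :
    ∃ (Q : E) (q : F.obj Q = M) (e : Q ⟶ W) (f : Q ⟶ W'), F.map e = eqToHom q ≫ a ∧
      F.map f = eqToHom q ≫ b ∧ e ≫ α = f ≫ β ∧ S (e ≫ α) := by
  obtain ⟨Q, rfl, e, h1, h2⟩ := hS.ext_left hF hα a
  obtain ⟨f, h3, h4⟩ := hS.lift_hom hF h2 hβ b (by
    rw [F.map_comp, h1, ← h]; simp)
  exact ⟨Q, rfl, e, f, h1, by simpa using h4, h3.symm, h2⟩

lemma directed (hS : PathSet F X S) (hF : IsDCF F) (hB : RightOre B) {W W' : E} {α : W ⟶ X}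
    {β : W' ⟶ X} (hα : S α) (hβ : S β) :
    ∃ (Q : E) (e : Q ⟶ W) (f : Q ⟶ W'), e ≫ α = f ≫ β ∧ S (e ≫ α) := by
  obtain ⟨P, a, b, h⟩ := hB (F.map α) (F.map β)
  obtain ⟨Q, _, e, f, _, _, h1, h2⟩ := hS.lift_square hF hα hβ a b h
  exact ⟨Q, e, f, h1, h2⟩

lemma id_mem (hS : PathSet F X S) : S (𝟙 X) := by
  obtain ⟨Z, α, _, _, h⟩ := hS.ex (𝟙 (F.obj X))
  exact hS.head α (𝟙 X) (by simpa using h)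

/-- The path set of `res_μ x`. -/
lemma res (hS : PathSet F X S) (hF : IsDCF F) {Y : E} {μ : Y ⟶ X} (hμ : S μ) :
    PathSet F Y (fun _ α => S (α ≫ μ)) where
  head β α h := hS.head β (α ≫ μ) (by simpa using h)
  ex u := by
    obtain ⟨Q, h, e, h1, h2⟩ := hS.ext_left hF hμ u
    exact ⟨Q, e, h, h1, h2⟩
  uniq {Z Z'} α α' h h' e he := by
    obtain ⟨rfl, h2⟩ := hS.uniq _ _ h h' e (by simp [he])
    exact ⟨rfl, by simpa using hF.cancel (by simpa using h2) (by simpa using he)⟩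

end PathSet

/-- The set underlying `ind_μ w`, for `w` with underlying set `S`. -/
def indSet {X Y : E} (μ : Y ⟶ X) (S : ∀ ⦃Z : E⦄, (Z ⟶ Y) → Prop) ⦃Z : E⦄ (β : Z ⟶ X) : Prop :=
  ∃ (Q : E) (γ : Q ⟶ Z) (η : Q ⟶ Y), γ ≫ β = η ≫ μ ∧ S η

/-- This is where the strong form of the right Ore condition enters: it makes the lift of a
morphism of `B` to `indSet μ S` independent of the chosen square. -/
lemma PathSet.ind {F : E ⥤ B} {X Y : E} {S : ∀ ⦃Z : E⦄, (Z ⟶ Y) → Prop} (hS : PathSet F Y S)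
    (hF : IsDCF F) (hB : StronglyRightOre B) (μ : Y ⟶ X) : PathSet F X (indSet μ S) where
  head := by
    rintro Z Z' β α ⟨Q, γ, η, h, hη⟩
    exact ⟨Q, γ ≫ β, η, by simpa using h, hη⟩
  ex u := by
    obtain ⟨P, p, q, h⟩ := hB.1 u (F.map μ)
    obtain ⟨Q, η, rfl, h1, h2⟩ := hS.ex q
    obtain ⟨Z, γ, δ, e, h3, h4, h5⟩ := hF.lift (η ≫ μ) p u (by simp [h1, h])
    exact ⟨Z, δ, e, h5, Q, γ, η, h3, h2⟩
  uniq := by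
    rintro Z Z' β β' ⟨Q, γ, η, h, hη⟩ ⟨Q', γ', η', h', hη'⟩ e he
    obtain ⟨P, a, b, h1, h2⟩ := hB.2 (F.map β) (F.map μ) (F.map γ) (F.map η)
      (F.map γ' ≫ eqToHom e.symm) (F.map η') (by simp only [← F.map_comp, h])
      (by rw [he, ← F.map_comp, ← h', F.map_comp]; simp)
    obtain ⟨R, rfl, c, d, h3, h4, h5, -⟩ := hS.lift_square hF hη hη' a b h2
    have h6 : (c ≫ γ) ≫ β = (d ≫ γ') ≫ β' := by
      rw [Category.assoc, Category.assoc, h, h', ← Category.assoc, h5, Category.assoc]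
    obtain ⟨q, -, h7⟩ := hF.uniq h6 e (by
      simp only [F.map_comp, h3, h4]; simpa using h1) he
    exact ⟨q, h7⟩

lemma PathSet.indSet_comp {F : E ⥤ B} {X Y : E} {S : ∀ ⦃Z : E⦄, (Z ⟶ Y) → Prop}
    (hS : PathSet F Y S) (hF : IsDCF F) (hB : StronglyRightOre B) (μ : Y ⟶ X) {Z : E}
    (α : Z ⟶ Y) : indSet μ S (α ≫ μ) ↔ S α := by
  constructor
  · intro h
    obtain ⟨Z', α', e, h1, h2⟩ := hS.ex (F.map α)
    have h3 : indSet μ S (α' ≫ μ) := ⟨Z', 𝟙 _, α', by simp, h2⟩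
    obtain ⟨rfl, h4⟩ := (hS.ind hF hB μ).uniq _ _ h3 h e (by simp [h1])
    have : α' = α := hF.cancel (by simpa using h4) (by simpa using h1)
    exact this ▸ h2
  · intro h
    exact ⟨Z, 𝟙 _, α, by simp, h⟩

section InfPath

variable {F : E ⥤ B}

lemma InfPath.mem_obj {X : E} (x : InfPath F X) (u : Over (F.obj X)) :
    InPathOf (x.fn.obj u).hom x := by
  have h : Over.mk (F.map (x.fn.obj u).hom) = u := Functor.congr_obj x.sec u
  unfold InPathOf
  rw [h]
  rfl

lemma InfPath.pathSet (hF : IsDCF F) {X : E} (x : InfPath F X) :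
    PathSet F X (fun _ α => InPathOf α x) where
  head {Y Z} β α h := by
    have key : ∀ (o : Over (F.obj X)) (A : Over X), A = x.fn.obj o →
        ∀ A' : Over X, A' = x.fn.obj (Over.mk (F.map α)) →
        ∀ m : o ⟶ Over.mk (F.map α), ∃ (k : A ⟶ A') (p : (Over.post F).obj A = o)
          (p' : (Over.post F).obj A' = Over.mk (F.map α)),
          (Over.post F).map k = eqToHom p ≫ m ≫ eqToHom p'.symm := by
      rintro o A rfl A' rfl m
      exact ⟨x.fn.map m, Functor.congr_obj x.sec o, Functor.congr_obj x.sec _,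
        Functor.congr_hom x.sec m⟩
    obtain ⟨k, p, p', hk⟩ := key (Over.mk (F.map (β ≫ α))) (Over.mk (β ≫ α)) h.symm _ rfl
      (Over.homMk (F.map β) (by simp))
    have e : F.obj Z = F.obj (x.fn.obj (Over.mk (F.map α))).left :=
      (congrArg (fun o : Over (F.obj X) => o.left) p').symm
    have hk' := congrArg (fun m => CommaMorphism.left m) hk
    obtain ⟨_, hr⟩ := over_mk_eq.1 (p'.symm : Over.mk (F.map α) = Over.mk (F.map (x.fn.obj
      (Over.mk (F.map α))).hom))
    obtain ⟨q, -, h2⟩ := hF.uniq (l₁ := β) (r₁ := α) (l₂ := k.left)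
      (r₂ := (x.fn.obj (Over.mk (F.map α))).hom) (Over.w k).symm e
      (by
        simp only [Over.comp_left, Over.eqToHom_left, Over.homMk_left] at hk'
        have : F.map k.left = F.map β ≫ eqToHom e := hk'.trans (Category.id_comp _)
        simp [this]) hr
    exact (over_mk_eq.2 ⟨q, h2⟩).symm
  ex {M} u := by
    obtain ⟨h, h'⟩ := over_mk_eq.1 (Functor.congr_obj x.sec (Over.mk u) :
      Over.mk (F.map (x.fn.obj (Over.mk u)).hom) = Over.mk u)
    exact ⟨_, (x.fn.obj (Over.mk u)).hom, h, h', x.mem_obj _⟩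
  uniq α α' h h' e he := by
    have : Over.mk (F.map α) = Over.mk (F.map α') := over_mk_eq.2 ⟨e, he⟩
    unfold InPathOf at h h'
    exact over_mk_eq.1 (by rw [← h, ← h', this])

lemma post_map_injective (hF : IsDCF F) {X : E} {o o' : Over X} {k k' : o ⟶ o'}
    (h : (Over.post F).map k = (Over.post F).map k') : k = k' := by
  ext
  exact hF.cancel ((Over.w k).trans (Over.w k').symm)
    (congrArg (fun m => CommaMorphism.left m) h)

/-- Every path set is the set of morphisms through which some infinite path passes. -/
lemma PathSet.exists_infPath (hF : IsDCF F) {X : E} {S : ∀ ⦃Y : E⦄, (Y ⟶ X) → Prop}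
    (hS : PathSet F X S) : ∃ x : InfPath F X, ∀ {Y : E} (α : Y ⟶ X), InPathOf α x ↔ S α := by
  have h1 : ∀ u : Over (F.obj X), ∃ o : Over X, (Over.post F).obj o = u ∧ S o.hom := by
    intro u
    obtain ⟨Z, α, e, h, hα⟩ := hS.ex u.hom
    exact ⟨Over.mk α, over_mk_eq.2 ⟨e, h⟩, hα⟩
  choose ob hob hSob using h1
  have h2 : ∀ (u v : Over (F.obj X)) (m : u ⟶ v), ∃ k : ob u ⟶ ob v,
      (Over.post F).map k = eqToHom (hob u) ≫ m ≫ eqToHom (hob v).symm := by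
    intro u v m
    let n := eqToHom (hob u) ≫ m ≫ eqToHom (hob v).symm
    obtain ⟨γ, hγ, hn⟩ := hS.lift_hom hF (hSob u) (hSob v) n.left (Over.w n)
    exact ⟨Over.homMk γ hγ, by ext; exact hn⟩
  choose mp hmp using h2
  let f : Over (F.obj X) ⥤ Over X :=
    { obj := ob
      map := fun {u v} m => mp u v m
      map_id := fun u => post_map_injective hF (by rw [hmp, CategoryTheory.Functor.map_id]; simp)
      map_comp := fun a b => post_map_injective hF (by
        rw [hmp, CategoryTheory.Functor.map_comp, hmp, hmp]; simp) }
  let x : InfPath F X := ⟨f, CategoryTheory.Functor.ext hob (fun u v m => hmp u v m)⟩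
  refine ⟨x, fun {Y} α => ⟨fun h => ?_, fun h => ?_⟩⟩
  · have h3 : ob (Over.mk (F.map α)) = Over.mk α := h
    have h4 := hSob (Over.mk (F.map α))
    rw [h3] at h4
    exact h4
  · obtain ⟨q, hq⟩ := over_mk_eq.1 (hob (Over.mk (F.map α)) :
      Over.mk (F.map (ob (Over.mk (F.map α))).hom) = Over.mk (F.map α))
    exact over_mk_eq.2 (hS.uniq _ α (hSob _) h q hq)

/-! ### Translation of paths -/

lemma indRel_iff (hF : IsDCF F) {X Y : E} (μ : Y ⟶ X) (w : InfPath F Y) (x : InfPath F X) :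
    IndRel F μ w x ↔ ∀ {Z : E} (α : Z ⟶ Y), InPathOf α w ↔ InPathOf (α ≫ μ) x := by
  constructor
  · intro h Z α
    have h1 : x.fn.obj (Over.mk (F.map (α ≫ μ))) =
        Over.mk ((w.fn.obj (Over.mk (F.map α))).hom ≫ μ) := by
      rw [F.map_comp]; exact h (F.map α)
    constructor
    · intro hα
      unfold InPathOf at hα ⊢
      rw [h1, hα]
      rfl
    · intro hα
      unfold InPathOf at hα
      rw [h1] at hα
      obtain ⟨q, hq⟩ := over_mk_eq.1 hα
      obtain ⟨e, he⟩ := over_mk_eq.1 (Functor.congr_obj w.sec (Over.mk (F.map α)) :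
        Over.mk (F.map (w.fn.obj (Over.mk (F.map α))).hom) = Over.mk (F.map α))
      have hw := w.mem_obj (Over.mk (F.map α))
      generalize (w.fn.obj (Over.mk (F.map α))).hom = α' at *
      generalize (w.fn.obj (Over.mk (F.map α))).left = Z' at *
      subst q
      have : α' = α := hF.cancel (by simpa using hq) (by simpa using he)
      exact this ▸ hw
  · intro h A a
    have h1 := (h _).1 (w.mem_obj (Over.mk a))
    have h2 : Over.mk (F.map (w.fn.obj (Over.mk a)).hom) = Over.mk a :=
      Functor.congr_obj w.sec (Over.mk a)
    obtain ⟨e, he⟩ := over_mk_eq.1 h2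
    have h3 : Over.mk (F.map ((w.fn.obj (Over.mk a)).hom ≫ μ)) = Over.mk (a ≫ F.map μ) :=
      over_mk_eq.2 ⟨e, by rw [F.map_comp, he]; simp⟩
    unfold InPathOf at h1
    rwa [h3] at h1

/-- `y = ind_μ (res_ν x)`, in terms of the morphisms through which `x` and `y` pass. -/
def Tr {W U V : E} (μ : W ⟶ U) (ν : W ⟶ V) (x : InfPath F V) (y : InfPath F U) : Prop :=
  InPathOf ν x ∧ ∀ {Z : E} (α : Z ⟶ W), InPathOf (α ≫ ν) x ↔ InPathOf (α ≫ μ) y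

lemma Tr.mem {W U V : E} {μ : W ⟶ U} {ν : W ⟶ V} {x : InfPath F V} {y : InfPath F U}
    (h : Tr μ ν x y) : InPathOf μ y := by
  have := (h.2 (𝟙 W)).1 (by rw [Category.id_comp]; exact h.1)
  rwa [Category.id_comp] at this

lemma translates_iff (hF : IsDCF F) {W U V : E} (μ : W ⟶ U) (ν : W ⟶ V) (x : InfPath F V)
    (y : InfPath F U) : Translates F μ ν x y ↔ Tr μ ν x y := by
  constructor
  · rintro ⟨w, ⟨h1, h2⟩, h3, h4⟩
    rw [indRel_iff hF] at h2 h4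
    exact ⟨h1, fun α => (h2 α).symm.trans (h4 α)⟩
  · intro h
    obtain ⟨w, hw⟩ := ((x.pathSet hF).res hF h.1).exists_infPath hF
    exact ⟨w, ⟨h.1, (indRel_iff hF _ _ _).2 hw⟩, h.mem,
      (indRel_iff hF _ _ _).2 fun α => (hw α).trans (h.2 α)⟩

lemma translatesP_iff (hF : IsDCF F) {W U V : E} (μ : W ⟶ U) (ν : W ⟶ V) (x : InfPath F V)
    (y : InfPath F U) : TranslatesP F μ ν ⟨V, x⟩ ⟨U, y⟩ ↔ Tr μ ν x y := by
  rw [← translates_iff hF]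
  exact ⟨fun ⟨_, _, h⟩ => h, fun h => ⟨rfl, rfl, h⟩⟩

lemma exists_tr (hF : IsDCF F) (hB : StronglyRightOre B) {W U V : E} (μ : W ⟶ U) {ν : W ⟶ V}
    {x : InfPath F V} (hx : InPathOf ν x) : ∃ y : InfPath F U, Tr μ ν x y := by
  have hw := (x.pathSet hF).res hF hx
  obtain ⟨y, hy⟩ := (hw.ind hF hB μ).exists_infPath hF
  exact ⟨y, hx, fun α => ((hy _).trans (hw.indSet_comp hF hB μ α)).symm⟩

/-- On `Z(ν ∘ γ)`, the pairs `(μ ∘ γ, ν ∘ γ)` and `(μ, ν)` translate paths in the same way. The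
nontrivial direction extends the comparison from members of `x` that factor through `ν ∘ γ` to
those that factor through `ν`, by directedness and closure under right factors. -/
lemma tr_comp (hF : IsDCF F) (hB : RightOre B) {Q W U V : E} {μ : W ⟶ U} {ν : W ⟶ V} (γ : Q ⟶ W)
    {x : InfPath F V} {y : InfPath F U} (hx : InPathOf (γ ≫ ν) x) :
    Tr (γ ≫ μ) (γ ≫ ν) x y ↔ Tr μ ν x y := by
  have hν : InPathOf ν x := (x.pathSet hF).head _ _ hx
  constructor
  · intro h
    have hμ : InPathOf μ y := (y.pathSet hF).head _ _ h.mem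
    refine ⟨hν, fun {Z} α => ⟨fun hα => ?_, fun hα => ?_⟩⟩
    · obtain ⟨R, e, f, h1, h2⟩ := ((x.pathSet hF).res hF hν).directed hF hB hα hx
      rw [h1] at h2
      have h3 := (h.2 f).1 (by simpa using h2)
      rw [← Category.assoc, ← h1, Category.assoc] at h3
      exact (y.pathSet hF).head _ _ h3
    · obtain ⟨R, e, f, h1, h2⟩ := ((y.pathSet hF).res hF hμ).directed hF hB hα h.mem
      rw [h1] at h2
      have h3 := (h.2 f).2 (by simpa using h2)
      rw [← Category.assoc, ← h1, Category.assoc] at h3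
      exact (x.pathSet hF).head _ _ h3
  · intro h
    refine ⟨hx, fun α => ?_⟩
    simpa using h.2 (α ≫ γ)

/-! ### The equivalence relation -/

lemma mem_ZMor {X Y : E} (μ : Y ⟶ X) (x : InfPath F X) :
    (⟨X, x⟩ : FInf F) ∈ ZMor F μ ↔ InPathOf μ x :=
  ⟨fun ⟨_, h⟩ => h, fun h => ⟨rfl, h⟩⟩

lemma exists_of_mem_ZMor {X Y : E} {μ : Y ⟶ X} {p : FInf F} (hp : p ∈ ZMor F μ) :
    ∃ x : InfPath F X, p = ⟨X, x⟩ ∧ InPathOf μ x := by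
  obtain ⟨X', x⟩ := p
  obtain ⟨h, hx⟩ := hp
  change X' = X at h
  subst h
  exact ⟨x, rfl, hx⟩

/-- Equality of elements of `𝒢_F` after refinement by morphisms of `E`: `(μ, ν, x)` and
`(μ', ν', x)` are related when `μ ∘ γ = μ' ∘ γ'` and `ν ∘ γ = ν' ∘ γ'` for some `γ`, `γ'` with
`x ∈ Z(ν ∘ γ)`. -/
inductive Refine : PreG F → PreG F → Prop
  | mk {W W' U V Q : E} (μ : W ⟶ U) (ν : W ⟶ V) (μ' : W' ⟶ U) (ν' : W' ⟶ V) (x : InfPath F V)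
      (m : InPathOf ν x) (m' : InPathOf ν' x) (γ : Q ⟶ W) (γ' : Q ⟶ W')
      (hμ : γ ≫ μ = γ' ≫ μ') (hν : γ ≫ ν = γ' ≫ ν') (h : InPathOf (γ ≫ ν) x) :
      Refine ⟨W, U, V, μ, ν, x, m⟩ ⟨W', U, V, μ', ν', x, m'⟩

/-- A common refinement exists in `E`, and not only in `B`, since the equalities between
composites of the lifts are forced by `x` on one side and by the common translate of `x` on the
other. -/
lemma geRel_iff (hF : IsDCF F) (hB : StronglyRightOre B) (g g' : PreG F) :
    GERel F g g' ↔ Refine g g' := by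
  constructor
  · obtain ⟨W, U, V, μ, ν, x, m⟩ := g
    obtain ⟨W', U', V', μ', ν', x', m'⟩ := g'
    rintro ⟨⟨hV, hx⟩, ⟨Λ, lam, h1, -, h3⟩, M, a, b, h4, h5⟩
    change V = V' at hV
    subst hV
    change x = x' at hx
    subst hx
    dsimp only at *
    obtain ⟨y, hy⟩ := exists_tr hF hB μ m
    have hy' := (h3 ⟨V, x⟩ h1 ⟨U, y⟩).1 ((translatesP_iff hF _ _ _ _).2 hy)
    have hU : U = U' := hy'.2.1
    subst hU
    rw [translatesP_iff hF] at hy'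
    obtain ⟨_, _, h4⟩ := h4
    obtain ⟨_, _, h5⟩ := h5
    simp only [eqToHom_refl, Category.id_comp, Category.comp_id] at h4 h5
    obtain ⟨Q, q, γ, γ', h6, h7, h8, h9⟩ := (x.pathSet hF).lift_square hF m m' a b h5
    refine Refine.mk μ ν μ' ν' x m m' γ γ' ?_ h8 h9
    have h10 : InPathOf (γ ≫ μ) y := (hy.2 γ).1 h9
    have h11 : InPathOf (γ' ≫ μ') y := (hy'.2 γ').1 (h8 ▸ h9)
    obtain ⟨_, h12⟩ := (y.pathSet hF).uniq _ _ h10 h11 rfl (by simp [h6, h7, h4])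
    simpa using h12
  · rintro ⟨μ, ν, μ', ν', x, m, m', γ, γ', hμ, hν, h⟩
    refine ⟨⟨rfl, rfl⟩, ⟨_, γ ≫ ν, (mem_ZMor _ _).2 h, ?_, ?_⟩, _, F.map γ, F.map γ',
      ⟨rfl, rfl, ?_⟩, ⟨rfl, rfl, ?_⟩⟩
    · rintro p hp
      obtain ⟨z, rfl, hz⟩ := exists_of_mem_ZMor hp
      exact ⟨⟨rfl, (z.pathSet hF).head _ _ hz⟩, ⟨rfl, (z.pathSet hF).head γ' ν' (hν ▸ hz)⟩⟩
    · rintro p hp ⟨U₁, y⟩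
      obtain ⟨z, rfl, hz⟩ := exists_of_mem_ZMor hp
      have hz' : InPathOf (γ ≫ ν) z := hz
      constructor
      · intro ht
        obtain rfl : U₁ = _ := ht.2.1
        rw [translatesP_iff hF, ← tr_comp hF hB.1 γ hz'] at ht
        rw [translatesP_iff hF, ← tr_comp hF hB.1 γ' (hν ▸ hz'), ← hν, ← hμ]
        exact ht
      · intro ht
        obtain rfl : U₁ = _ := ht.2.1
        rw [translatesP_iff hF, ← tr_comp hF hB.1 γ' (hν ▸ hz'), ← hν, ← hμ] at ht
        rw [translatesP_iff hF, ← tr_comp hF hB.1 γ hz']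
        exact ht
    · simp only [eqToHom_refl, Category.id_comp, Category.comp_id, ← F.map_comp, hμ]
    · simp only [eqToHom_refl, Category.id_comp, Category.comp_id, ← F.map_comp, hν]

lemma Refine.refl (g : PreG F) : Refine g g := by
  obtain ⟨W, U, V, μ, ν, x, m⟩ := g
  exact .mk μ ν μ ν x m m (𝟙 W) (𝟙 W) rfl rfl (by rw [Category.id_comp]; exact m)

lemma Refine.symm {g g' : PreG F} (h : Refine g g') : Refine g' g := by
  obtain ⟨μ, ν, μ', ν', x, m, m', γ, γ', hμ, hν, h⟩ := h
  exact .mk μ' ν' μ ν x m' m γ' γ hμ.symm hν.symm (hν ▸ h)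

lemma Refine.trans (hF : IsDCF F) (hB : RightOre B) {g g' g'' : PreG F} (h : Refine g g')
    (h' : Refine g' g'') : Refine g g'' := by
  obtain ⟨μ, ν, μ', ν', x, m, m', γ, γ', hμ, hν, h⟩ := h
  cases h' with
  | mk _ _ μ'' ν'' _ _ m'' δ δ' kμ kν k =>
    obtain ⟨R, e, f, h1, h2⟩ := ((x.pathSet hF).res hF m').directed hF hB (α := γ') (β := δ)
      (hν ▸ h) k
    refine .mk μ ν μ'' ν'' x m m'' (e ≫ γ) (f ≫ δ') ?_ ?_ ?_
    · rw [Category.assoc, Category.assoc, hμ, ← kμ, ← Category.assoc, h1, Category.assoc]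
    · rw [Category.assoc, Category.assoc, hν, ← kν, ← Category.assoc, h1, Category.assoc]
    · rw [Category.assoc, hν, ← Category.assoc]
      exact h2

/-! ### Composition -/

/-- `CompRel`, with the equality of objects `h.U = g.V` eliminated and the other conditions
expressed through membership of morphisms in paths. -/
inductive Comp : PreG F → PreG F → PreG F → Prop
  | mk {W U V W' V' P : E} (μ : W ⟶ U) (ν : W ⟶ V) (x : InfPath F V) (m : InPathOf ν x)
      (σ : W' ⟶ V) (τ : W' ⟶ V') (y : InfPath F V') (n : InPathOf τ y) (t : Tr σ τ y x)
      (γ : P ⟶ W) (η : P ⟶ W') (h : γ ≫ ν = η ≫ σ) (hm : InPathOf (γ ≫ ν) x)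
      (hn : InPathOf (η ≫ τ) y) (k : PreG F)
      (hk : Refine k ⟨P, U, V', γ ≫ μ, η ≫ τ, y, hn⟩) :
      Comp ⟨W, U, V, μ, ν, x, m⟩ ⟨W', V, V', σ, τ, y, n⟩ k

lemma compRel_iff (hF : IsDCF F) (hB : StronglyRightOre B) (g h k : PreG F) :
    CompRel F g h k ↔ Comp g h k := by
  constructor
  · obtain ⟨W, U, V, μ, ν, x, m⟩ := g
    obtain ⟨W', U', V', σ, τ, y, n⟩ := h
    rintro ⟨ht, P, γ, η, hUV, h1, h2, h3, h4⟩
    change U' = V at hUV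
    subst hUV
    dsimp only at *
    rw [translatesP_iff hF] at ht
    rw [geRel_iff hF hB] at h4
    exact .mk μ ν x m σ τ y n ht γ η (by simpa using h1) h2 h3 k h4
  · rintro ⟨μ, ν, x, m, σ, τ, y, n, t, γ, η, h, hm, hn, _, hk⟩
    exact ⟨(translatesP_iff hF _ _ _ _).2 t, _, γ, η, rfl, by simpa using h, hm, hn,
      (geRel_iff hF hB _ _).2 hk⟩

lemma Tr.mem_of_square {W V W' V' P : E} {ν : W ⟶ V} {x : InfPath F V} {σ : W' ⟶ V} {τ : W' ⟶ V'}
    {y : InfPath F V'} (t : Tr σ τ y x) {γ : P ⟶ W} {η : P ⟶ W'} (h : γ ≫ ν = η ≫ σ)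
    (hm : InPathOf (γ ≫ ν) x) : InPathOf (η ≫ τ) y :=
  (t.2 η).2 (h ▸ hm)

/-- The class of a composite does not depend on the square used to form it. As `E` has no
cancellation, the comparison of two squares comes from the strong right Ore condition in `B`. -/
lemma refine_square (hF : IsDCF F) (hB : StronglyRightOre B) {W U V W' V' P P' : E} (μ : W ⟶ U)
    {ν : W ⟶ V} {x : InfPath F V} (m : InPathOf ν x) {σ : W' ⟶ V} {τ : W' ⟶ V'}
    {y : InfPath F V'} (t : Tr σ τ y x) {γ : P ⟶ W} {η : P ⟶ W'} (h : γ ≫ ν = η ≫ σ)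
    (hm : InPathOf (γ ≫ ν) x) (hn : InPathOf (η ≫ τ) y) {γ' : P' ⟶ W} {η' : P' ⟶ W'}
    (h' : γ' ≫ ν = η' ≫ σ) (hm' : InPathOf (γ' ≫ ν) x) (hn' : InPathOf (η' ≫ τ) y) :
    Refine ⟨P, U, V', γ ≫ μ, η ≫ τ, y, hn⟩ ⟨P', U, V', γ' ≫ μ, η' ≫ τ, y, hn'⟩ := by
  obtain ⟨M, a, b, h1, h2⟩ := hB.2 (F.map ν) (F.map σ) (F.map γ) (F.map η) (F.map γ') (F.map η')
    (by simp only [← F.map_comp, h]) (by simp only [← F.map_comp, h'])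
  obtain ⟨Q, rfl, e, f, h3, h4, h5, h6⟩ := ((x.pathSet hF).res hF m).lift_square hF
    (α := γ) (β := γ') hm hm' a b h1
  simp only [eqToHom_refl, Category.id_comp] at h3 h4
  have h7 : e ≫ η = f ≫ η' := hF.cancel (r := σ)
    (by rw [Category.assoc, Category.assoc, ← h, ← h', ← Category.assoc, h5, Category.assoc])
    (by rw [F.map_comp, F.map_comp, h3, h4, h2])
  refine .mk _ _ _ _ y hn hn' e f ?_ ?_ ?_
  · rw [← Category.assoc, h5, Category.assoc]
  · rw [← Category.assoc, h7, Category.assoc]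
  · rw [← Category.assoc]
    refine t.mem_of_square (γ := e ≫ γ) (ν := ν) ?_ h6
    rw [Category.assoc, Category.assoc, h]

lemma exists_comp (hF : IsDCF F) (hB : StronglyRightOre B) (g h : PreG F)
    (t : TranslatesP F h.μ h.ν ⟨h.V, h.x⟩ ⟨g.V, g.x⟩) : ∃ k, CompRel F g h k := by
  obtain ⟨W, U, V, μ, ν, x, m⟩ := g
  obtain ⟨W', U', V', σ, τ, y, n⟩ := h
  dsimp only at t
  obtain rfl : V = U' := t.2.1
  rw [translatesP_iff hF] at t
  obtain ⟨P, γ, η, h1, h2⟩ := (x.pathSet hF).directed hF hB.1 m t.mem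
  exact ⟨_, (compRel_iff hF hB _ _ _).2
    (.mk μ ν x m σ τ y n t γ η h1 h2 (t.mem_of_square h1 h2) _ (Refine.refl _))⟩

/-- Two composable pairs of representatives of the same classes have a common refinement, whose
composite is computed by a square for either pair. -/
lemma Comp.congr (hF : IsDCF F) (hB : StronglyRightOre B) {g g' h h' k k' : PreG F}
    (hg : Refine g g') (hh : Refine h h') (hk : Comp g h k) (hk' : Comp g' h' k') :
    Refine k k' := by
  obtain ⟨μ, ν, μ', ν', x, m, m', α, α', αμ, αν, hα⟩ := hg
  cases hk with
  | mk _ _ _ _ σ τ y n t γ η h1 hm hn _ hk =>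
  cases hh with
  | mk _ _ σ' τ' _ _ n' β β' βσ βτ hβ =>
  cases hk' with
  | mk _ _ _ _ _ _ _ _ t' γ' η' h1' hm' hn' _ hk' =>
  obtain ⟨Q, c, d, h2, h3⟩ := (x.pathSet hF).directed hF hB.1 hα ((t.2 β).1 hβ)
  have s1 : (c ≫ α) ≫ ν = (d ≫ β) ≫ σ := by simpa using h2
  have s2 : (c ≫ α') ≫ ν' = (d ≫ β') ≫ σ' := by
    rw [Category.assoc, ← αν, h2, βσ, Category.assoc]
  have e1 : InPathOf ((c ≫ α) ≫ ν) x := by rw [Category.assoc]; exact h3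
  have e2 : InPathOf ((c ≫ α') ≫ ν') x := by rw [Category.assoc, ← αν]; exact h3
  have r1 := refine_square hF hB μ m t h1 hm hn s1 e1 (t.mem_of_square s1 e1)
  have r2 := refine_square hF hB μ' m' t' h1' hm' hn' s2 e2 (t'.mem_of_square s2 e2)
  have r3 : Refine (F := F) ⟨Q, _, _, (c ≫ α) ≫ μ, (d ≫ β) ≫ τ, y, t.mem_of_square s1 e1⟩
      ⟨Q, _, _, (c ≫ α') ≫ μ', (d ≫ β') ≫ τ', y, t'.mem_of_square s2 e2⟩ :=
    .mk _ _ _ _ y _ _ (𝟙 Q) (𝟙 Q) (by simp [αμ]) (by simp [βτ])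
      (by rw [Category.id_comp]; exact t.mem_of_square s1 e1)
  exact (hk.trans hF hB.1 r1).trans hF hB.1
    ((r3.trans hF hB.1 r2.symm).trans hF hB.1 hk'.symm)

lemma Comp.assoc (hF : IsDCF F) (hB : StronglyRightOre B) {g h k gh hk l₁ l₂ : PreG F}
    (h1 : Comp g h gh) (h2 : Comp h k hk) (h3 : Comp gh k l₁) (h4 : Comp g hk l₂) :
    Refine l₁ l₂ := by
  obtain ⟨μ, ν, x, m, σ, τ, y, n, t, γ, η, s, hm, hn, _, r⟩ := id h1
  cases id h2 with
  | mk _ _ _ _ π ρ z o t' γ' η' s' hm' hn' _ r' =>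
  obtain ⟨Q, c, d, h5, h6⟩ := (y.pathSet hF).directed hF hB.1 hn t'.mem
  -- The squares `δ₁ ≫ ν = δ₂ ≫ σ` and `δ₂ ≫ τ = d ≫ π` exhibit both bracketings as the class
  -- of `(δ₁ ≫ μ, d ≫ ρ, z)`.
  obtain ⟨δ₁, hδ₁⟩ : ∃ δ₁, δ₁ = c ≫ γ := ⟨_, rfl⟩
  obtain ⟨δ₂, hδ₂⟩ : ∃ δ₂, δ₂ = c ≫ η := ⟨_, rfl⟩
  have e1 : δ₁ ≫ ν = δ₂ ≫ σ := by rw [hδ₁, hδ₂, Category.assoc, s, Category.assoc]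
  have e2 : δ₂ ≫ τ = d ≫ π := by rw [hδ₂, Category.assoc, h5]
  have y2 : InPathOf (δ₂ ≫ τ) y := by rw [hδ₂, Category.assoc]; exact h6
  have x1 : InPathOf (δ₁ ≫ ν) x := by rw [e1]; exact (t.2 δ₂).1 y2
  have z3 : InPathOf (d ≫ ρ) z := t'.mem_of_square e2 y2
  have c1 := Comp.mk μ ν x m σ τ y n t δ₁ δ₂ e1 x1 y2 _ (Refine.refl _)
  have c2 := Comp.mk σ τ y n π ρ z o t' δ₂ d e2 y2 z3 _ (Refine.refl _)
  have t'' : Tr (δ₂ ≫ σ) (d ≫ ρ) z x := ⟨z3, fun α => by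
    rw [← Category.assoc, t'.2, Category.assoc, ← e2, ← Category.assoc, t.2, Category.assoc]⟩
  have z4 : InPathOf (𝟙 Q ≫ d ≫ ρ) z := by rw [Category.id_comp]; exact z3
  have c3 := Comp.mk (δ₁ ≫ μ) (δ₂ ≫ τ) y y2 π ρ z o t' (𝟙 Q) d (by rw [Category.id_comp, e2])
    (by rw [Category.id_comp]; exact y2) z3 _ (Refine.refl _)
  have c4 := Comp.mk μ ν x m (δ₂ ≫ σ) (d ≫ ρ) z z3 t'' δ₁ (𝟙 Q) (by rw [Category.id_comp, e1])
    x1 z4 _ (Refine.refl _)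
  have r1 := Comp.congr hF hB (Comp.congr hF hB (.refl _) (.refl _) h1 c1) (.refl _) h3 c3
  have r2 := Comp.congr hF hB (.refl _) (Comp.congr hF hB (.refl _) (.refl _) h2 c2) h4 c4
  have r3 : Refine (F := F) ⟨Q, _, _, 𝟙 Q ≫ δ₁ ≫ μ, d ≫ ρ, z, z3⟩
      ⟨Q, _, _, δ₁ ≫ μ, 𝟙 Q ≫ d ≫ ρ, z, z4⟩ :=
    .mk _ _ _ _ z _ _ (𝟙 Q) (𝟙 Q) (by simp) (by simp) z4
  exact (r1.trans hF hB.1 r3).trans hF hB.1 r2.symm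

end InfPath

theorem statement_15 (F : E ⥤ B) (hF : IsKPF F) (hrf : RowFinite F) :
    -- `∼` is an equivalence relation
    Equivalence (GERel F) ∧
    -- identities lift, so the units `[r(x), r(x), x]` make sense
    (∀ (V : E) (x : InfPath F V), InPathOf (𝟙 V) x) ∧
    -- composites of composable pairs exist
    (∀ g h : PreG F, TranslatesP F h.μ h.ν ⟨h.V, h.x⟩ ⟨g.V, g.x⟩ →
      ∃ k, CompRel F g h k) ∧
    -- composition is well defined on `G_F = 𝒢_F/∼`
    (∀ g g' h h' k k' : PreG F, GERel F g g' → GERel F h h' →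
      CompRel F g h k → CompRel F g' h' k' → GERel F k k') ∧
    -- `[μ,ν,x]·[r(x),r(x),x] = [μ,ν,x]`
    (∀ (g : PreG F) (mem : InPathOf (𝟙 g.V) g.x) (k : PreG F),
      CompRel F g ⟨g.V, g.V, g.V, 𝟙 g.V, 𝟙 g.V, g.x, mem⟩ k → GERel F k g) ∧
    -- `[r(x'),r(x'),x']·[μ,ν,x] = [μ,ν,x]` where `x' = ind_μ (res_ν x)`
    (∀ (g : PreG F) (x' : InfPath F g.U) (mem : InPathOf (𝟙 g.U) x'),
      TranslatesP F g.μ g.ν ⟨g.V, g.x⟩ ⟨g.U, x'⟩ →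
      ∀ k, CompRel F ⟨g.U, g.U, g.U, 𝟙 g.U, 𝟙 g.U, x', mem⟩ g k → GERel F k g) ∧
    -- `[ν,μ,ind_μ(res_ν x)]` is inverse to `[μ,ν,x]`
    (∀ (g : PreG F) (x' : InfPath F g.U) (mem' : InPathOf g.μ x'),
      TranslatesP F g.μ g.ν ⟨g.V, g.x⟩ ⟨g.U, x'⟩ →
      (∀ k, CompRel F g ⟨g.W, g.V, g.U, g.ν, g.μ, x', mem'⟩ k →
        ∀ memU : InPathOf (𝟙 g.U) x',
          GERel F k ⟨g.U, g.U, g.U, 𝟙 g.U, 𝟙 g.U, x', memU⟩) ∧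
      (∀ k, CompRel F ⟨g.W, g.V, g.U, g.ν, g.μ, x', mem'⟩ g k →
        ∀ memV : InPathOf (𝟙 g.V) g.x,
          GERel F k ⟨g.V, g.V, g.V, 𝟙 g.V, 𝟙 g.V, g.x, memV⟩)) ∧
    -- associativity
    (∀ g h k gh hk l₁ l₂ : PreG F, CompRel F g h gh → CompRel F h k hk →
      CompRel F gh k l₁ → CompRel F g hk l₂ → GERel F l₁ l₂) := by
  obtain ⟨hD, -, hB⟩ := hF
  simp only [compRel_iff hD hB, geRel_iff hD hB]
  have hid : ∀ {Z Y : E} (α : Z ⟶ Y) (x : InfPath F Y), InPathOf α x → InPathOf (𝟙 Z ≫ α) x := by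
    intro Z Y α x h
    rw [Category.id_comp]
    exact h
  have hone : ∀ (V : E) (x : InfPath F V), InPathOf (𝟙 V) x := fun V x => (x.pathSet hD).id_mem
  refine ⟨⟨fun g => ?_, fun {g g'} h => ?_, fun {g g' g''} h h' => ?_⟩, hone, ?_, ?_, ?_, ?_, ?_,
    ?_⟩
  · exact (geRel_iff hD hB _ _).2 (.refl _)
  · exact (geRel_iff hD hB _ _).2 ((geRel_iff hD hB _ _).1 h).symm
  · exact (geRel_iff hD hB _ _).2
      (((geRel_iff hD hB _ _).1 h).trans hD hB.1 ((geRel_iff hD hB _ _).1 h'))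
  · intro g h t
    obtain ⟨k, hk⟩ := exists_comp hD hB g h t
    exact ⟨k, (compRel_iff hD hB _ _ _).1 hk⟩
  · intro g g' h h' k k' hg hh hk hk'
    exact Comp.congr hD hB hg hh hk hk'
  · rintro ⟨W, U, V, μ, ν, x, m⟩ mem k hk
    have t : Tr (𝟙 V) (𝟙 V) x x := ⟨mem, fun _ => Iff.rfl⟩
    have hν : InPathOf (ν ≫ 𝟙 V) x := by rw [Category.comp_id]; exact m
    refine Comp.congr hD hB (.refl _) (.refl _) hk (.mk μ ν x m (𝟙 V) (𝟙 V) x mem t (𝟙 W) ν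
      (by simp) (hid _ _ m) hν _ ?_)
    exact .mk _ _ _ _ x _ _ (𝟙 W) (𝟙 W) (by simp) (by simp) (hid _ _ m)
  · rintro ⟨W, U, V, μ, ν, x, m⟩ x' mem t k hk
    dsimp only at *
    rw [translatesP_iff hD] at t
    have hμ : InPathOf (μ ≫ 𝟙 U) x' := by rw [Category.comp_id]; exact t.mem
    refine Comp.congr hD hB (.refl _) (.refl _) hk (.mk (𝟙 U) (𝟙 U) x' mem μ ν x m t μ (𝟙 W)
      (by simp) hμ (hid _ _ m) _ ?_)
    exact .mk _ _ _ _ x _ _ (𝟙 W) (𝟙 W) (by simp) (by simp) (hid _ _ m)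
  · rintro ⟨W, U, V, μ, ν, x, m⟩ x' mem' t
    dsimp only at *
    rw [translatesP_iff hD] at t
    have t' : Tr ν μ x' x := ⟨mem', fun α => (t.2 α).symm⟩
    refine ⟨fun k hk memU => ?_, fun k hk memV => ?_⟩
    · refine Comp.congr hD hB (.refl _) (.refl _) hk (.mk μ ν x m ν μ x' mem' t' (𝟙 W) (𝟙 W)
        rfl (hid _ _ m) (hid _ _ mem') _ ?_)
      exact .mk _ _ _ _ x' _ _ μ (𝟙 W) (by simp) (by simp)
        (by rw [Category.comp_id]; exact mem')
    · refine Comp.congr hD hB (.refl _) (.refl _) hk (.mk ν μ x' mem' μ ν x m t (𝟙 W) (𝟙 W)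
        rfl (hid _ _ mem') (hid _ _ m) _ ?_)
      exact .mk _ _ _ _ x _ _ ν (𝟙 W) (by simp) (by simp)
        (by rw [Category.comp_id]; exact m)
  · intro g h k gh hk l₁ l₂ h1 h2 h3 h4
    exact Comp.assoc hD hB h1 h2 h3 h4

end DCFpaper
end
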